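/- Let d ≥ 2 and k ≥ 1 be integers, r₀ > 0, and let Q : ℝ^d → ℝ be a solid harmonic of degree k. For each ε ∈ (0, 1], let u_ε(x) := A_ε|x|^{2−d−2k}Q(x) + B_ε Q(x), where D_ε := k r₀^{d+2k−2} + (k+d−2)(r₀+ε)^{d+2k−2}, A_ε := k r₀^{d+2k−2}(r₀+ε)^{d+2k−2}/D_ε, and B_ε := (k+d−2)(r₀+ε)^{d+2k−2}/D_ε. Then there exists a constant C > 0, depending only on d, k, r₀ and Q but not on ε, such that |∇u_ε(x)| ≤ C for every ε ∈ (0, 1] and every x with r₀ < |x| < r₀ + ε. -/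

import Mathlib

open MeasureTheory Metric Set
open scoped InnerProductSpace

/-- The Laplacian of `f : ℝ^d → ℝ` at `x`, as the sum of the pure second
partial derivatives in the coordinate directions. -/
noncomputable def laplacian {d : ℕ} (f : EuclideanSpace ℝ (Fin d) → ℝ)
    (x : EuclideanSpace ℝ (Fin d)) : ℝ :=
  ∑ i : Fin d,
    iteratedFDeriv ℝ 2 f x ![EuclideanSpace.single i 1, EuclideanSpace.single i 1]

/-- `f` is harmonic on the open set `U ⊆ ℝ^d`: it is `C²` there and its
Laplacian vanishes on `U`. -/
def HarmonicOnSet {d : ℕ} (f : EuclideanSpace ℝ (Fin d) → ℝ)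
    (U : Set (EuclideanSpace ℝ (Fin d))) : Prop :=
  ContDiffOn ℝ 2 f U ∧ ∀ x ∈ U, laplacian f x = 0

/-- `Q : ℝ^d → ℝ` is a solid harmonic of degree `k`: a polynomial, homogeneous of
degree `k`, which is harmonic on all of `ℝ^d`. -/
def IsSolidHarmonic {d : ℕ} (k : ℕ) (Q : EuclideanSpace ℝ (Fin d) → ℝ) : Prop :=
  (∃ P : MvPolynomial (Fin d) ℝ, P.IsHomogeneous k ∧
    ∀ x : EuclideanSpace ℝ (Fin d), Q x = MvPolynomial.eval (fun i => x i) P) ∧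
  ∀ x : EuclideanSpace ℝ (Fin d), laplacian Q x = 0

/-!
The solution is a linear combination of two functions that do not depend on the width, `Q` and
`‖x‖ ^ (2 - d - 2 * k) * Q x`. Both are `C¹` away from the origin, hence have bounded gradient on a
closed shell containing all the annuli. Dropping the term `k * r₀ ^ (d + 2 * k - 2)` of their common
denominator bounds the coefficients by `1` and `k / (k + d - 2) * r₀ ^ (d + 2 * k - 2)`, uniformly
in the width.
-/

section GradientBound

open scoped Gradient

variable {E : Type*} [NormedAddCommGroup E] [InnerProductSpace ℝ E] [CompleteSpace E]

lemma norm_gradient_eq_norm_fderiv (f : E → ℝ) (x : E) : ‖∇ f x‖ = ‖fderiv ℝ f x‖ := by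
  rw [gradient, LinearIsometryEquiv.norm_map]

lemma norm_gradient_const_mul_add_const_mul_le {f g : E → ℝ} {x : E}
    (hf : DifferentiableAt ℝ f x) (hg : DifferentiableAt ℝ g x) (a b : ℝ) :
    ‖∇ (fun y => a * f y + b * g y) x‖ ≤ |a| * ‖∇ f x‖ + |b| * ‖∇ g x‖ := by
  simp only [norm_gradient_eq_norm_fderiv]
  calc ‖fderiv ℝ (fun y => a * f y + b * g y) x‖
      = ‖a • fderiv ℝ f x + b • fderiv ℝ g x‖ := by
        congr 1
        exact ((hf.hasFDerivAt.const_mul a).add (hg.hasFDerivAt.const_mul b)).fderiv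
    _ ≤ ‖a • fderiv ℝ f x‖ + ‖b • fderiv ℝ g x‖ := norm_add_le _ _
    _ = |a| * ‖fderiv ℝ f x‖ + |b| * ‖fderiv ℝ g x‖ := by
        rw [norm_smul, norm_smul, Real.norm_eq_abs, Real.norm_eq_abs]

lemma exists_norm_gradient_le_of_isCompact {f : E → ℝ} {U K : Set E} (hU : IsOpen U)
    (hf : ContDiffOn ℝ 1 f U) (hK : IsCompact K) (hKU : K ⊆ U) :
    ∃ C, ∀ x ∈ K, ‖∇ f x‖ ≤ C := by
  simp only [norm_gradient_eq_norm_fderiv]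
  exact hK.exists_bound_of_continuousOn ((hf.continuousOn_fderiv_of_isOpen hU le_rfl).mono hKU)

lemma exists_norm_gradient_const_mul_add_const_mul_le {f g : E → ℝ} {U K : Set E} (hU : IsOpen U)
    (hf : ContDiffOn ℝ 1 f U) (hg : ContDiffOn ℝ 1 g U) (hK : IsCompact K) (hKU : K ⊆ U)
    (α β : ℝ) :
    ∃ C, 0 < C ∧ ∀ a b : ℝ, |a| ≤ α → |b| ≤ β →
      ∀ x ∈ K, ‖∇ (fun y => a * f y + b * g y) x‖ ≤ C := by
  obtain ⟨M, hM⟩ := exists_norm_gradient_le_of_isCompact hU hf hK hKU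
  obtain ⟨N, hN⟩ := exists_norm_gradient_le_of_isCompact hU hg hK hKU
  refine ⟨max (α * M + β * N) 1, by positivity, fun a b ha hb x hx => le_max_of_le_left ?_⟩
  have differentiableAt {h : E → ℝ} (hh : ContDiffOn ℝ 1 h U) : DifferentiableAt ℝ h x :=
    (hh.differentiableOn one_ne_zero).differentiableAt (hU.mem_nhds (hKU hx))
  have hα : 0 ≤ α := (abs_nonneg a).trans ha
  have hβ : 0 ≤ β := (abs_nonneg b).trans hb
  calc ‖∇ (fun y => a * f y + b * g y) x‖
      ≤ |a| * ‖∇ f x‖ + |b| * ‖∇ g x‖ :=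
        norm_gradient_const_mul_add_const_mul_le (differentiableAt hf) (differentiableAt hg) a b
    _ ≤ α * M + β * N := by
        gcongr
        exacts [hM x hx, hN x hx]

end GradientBound

lemma contDiffOn_norm_rpow {E : Type*} [NormedAddCommGroup E] [InnerProductSpace ℝ E]
    (p : ℝ) (n : WithTop ℕ∞) : ContDiffOn ℝ n (fun x : E => ‖x‖ ^ p) {0}ᶜ :=
  (contDiffOn_id.norm ℝ fun _ hx => hx).rpow_const_of_ne fun _ hx => norm_ne_zero_iff.mpr hx

lemma IsSolidHarmonic.contDiff {d k : ℕ} {Q : EuclideanSpace ℝ (Fin d) → ℝ}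
    (hQ : IsSolidHarmonic k Q) (n : WithTop ℕ∞) : ContDiff ℝ n Q := by
  obtain ⟨⟨P, -, hP⟩, -⟩ := hQ
  rw [funext hP]
  exact (AnalyticOnNhd.eval_continuousLinearMap
    (EuclideanSpace.equiv (Fin d) ℝ).toContinuousLinearMap P).contDiff

section Coefficients

/-- The coefficient of `‖x‖ ^ p * Q x` in `insulatedPotential`, on the shell of radii `r` and `R`.
A solid harmonic of degree `k` on `ℝ^d` has `a = k`, `b = k + d - 2`, `q = d + 2 * k - 2`. -/
noncomputable def decayingCoeff (a b q r R : ℝ) : ℝ :=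
  a * r ^ q * R ^ q / (a * r ^ q + b * R ^ q)

/-- The coefficient of `Q x` in `insulatedPotential`, with parameters as in `decayingCoeff`. -/
noncomputable def growingCoeff (a b q r R : ℝ) : ℝ :=
  b * R ^ q / (a * r ^ q + b * R ^ q)

variable {a b r R : ℝ}

lemma abs_decayingCoeff_le (ha : 0 ≤ a) (hb : 0 < b) (q : ℝ) (hr : 0 ≤ r) (hR : 0 < R) :
    |decayingCoeff a b q r R| ≤ a / b * r ^ q := by
  rw [decayingCoeff, abs_of_nonneg (by positivity)]
  calc a * r ^ q * R ^ q / (a * r ^ q + b * R ^ q)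
      ≤ a * r ^ q * R ^ q / (b * R ^ q) := by
        gcongr
        exact le_add_of_nonneg_left (by positivity)
    _ = a / b * r ^ q := by field_simp

lemma abs_growingCoeff_le_one (ha : 0 ≤ a) (hb : 0 ≤ b) (q : ℝ) (hr : 0 ≤ r) (hR : 0 ≤ R) :
    |growingCoeff a b q r R| ≤ 1 := by
  rw [growingCoeff, abs_of_nonneg (by positivity)]
  exact div_le_one_of_le₀ (le_add_of_nonneg_left (by positivity)) (by positivity)

end Coefficients

/-- For a solid harmonic `Q`, with parameters as in `decayingCoeff` and `p = -q`, the solution of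
the insulated problem on the shell `r < ‖x‖ < R` with outer boundary data `Q`. -/
noncomputable def insulatedPotential {E : Type*} [Norm E] (a b p q r R : ℝ) (Q : E → ℝ) (x : E) :
    ℝ :=
  decayingCoeff a b q r R * ‖x‖ ^ p * Q x + growingCoeff a b q r R * Q x

theorem insulated_no_gradient_blowup_general {E : Type*} [NormedAddCommGroup E]
    [InnerProductSpace ℝ E] [ProperSpace E] {a b r : ℝ} (ha : 0 ≤ a) (hb : 0 < b) (hr : 0 < r)
    (p q R₁ : ℝ) {Q : E → ℝ} (hQ : ContDiffOn ℝ 1 Q {0}ᶜ) :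
    ∃ C, 0 < C ∧ ∀ R ≤ R₁, ∀ x : E, r < ‖x‖ → ‖x‖ < R →
      ‖gradient (insulatedPotential a b p q r R Q) x‖ ≤ C := by
  have shell_compact : IsCompact (closedBall (0 : E) R₁ \ ball 0 r) :=
    (isCompact_closedBall 0 R₁).diff isOpen_ball
  have shell_subset : closedBall (0 : E) R₁ \ ball 0 r ⊆ {0}ᶜ := by
    rintro _ ⟨-, hx⟩ rfl
    exact hx (mem_ball_self hr)
  obtain ⟨C, hC, hbound⟩ := exists_norm_gradient_const_mul_add_const_mul_le
    isOpen_compl_singleton ((contDiffOn_norm_rpow p 1).mul hQ) hQ shell_compact shell_subset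
    (a / b * r ^ q) 1
  refine ⟨C, hC, fun R hR x hrx hxR => ?_⟩
  have hR₀ : 0 < R := hr.trans (hrx.trans hxR)
  have hx : x ∈ closedBall (0 : E) R₁ \ ball 0 r :=
    ⟨mem_closedBall_zero_iff.mpr (hxR.le.trans hR), fun h => hrx.not_gt (mem_ball_zero_iff.mp h)⟩
  have potential_eq : insulatedPotential a b p q r R Q = fun y =>
      decayingCoeff a b q r R * (‖y‖ ^ p * Q y) + growingCoeff a b q r R * Q y := by
    funext y
    rw [insulatedPotential, mul_assoc]
  rw [potential_eq]
  exact hbound _ _ (abs_decayingCoeff_le ha hb q hr.le hR₀)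
    (abs_growingCoeff_le_one ha hb.le q hr.le hR₀.le) x hx

theorem insulated_no_gradient_blowup {d k : ℕ} (hd : 2 ≤ d) (hk : 1 ≤ k)
    {r₀ : ℝ} (hr₀ : 0 < r₀)
    (Q : EuclideanSpace ℝ (Fin d) → ℝ) (hQ : IsSolidHarmonic k Q) :
    let D : ℝ → ℝ := fun ε => (k : ℝ) * r₀ ^ ((d : ℝ) + 2 * (k : ℝ) - 2)
      + ((k : ℝ) + (d : ℝ) - 2) * (r₀ + ε) ^ ((d : ℝ) + 2 * (k : ℝ) - 2)
    let A : ℝ → ℝ := fun ε => (k : ℝ) * r₀ ^ ((d : ℝ) + 2 * (k : ℝ) - 2)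
      * (r₀ + ε) ^ ((d : ℝ) + 2 * (k : ℝ) - 2) / D ε
    let B : ℝ → ℝ := fun ε =>
      ((k : ℝ) + (d : ℝ) - 2) * (r₀ + ε) ^ ((d : ℝ) + 2 * (k : ℝ) - 2) / D ε
    let u : ℝ → EuclideanSpace ℝ (Fin d) → ℝ := fun ε x =>
      A ε * ‖x‖ ^ ((2 : ℝ) - (d : ℝ) - 2 * (k : ℝ)) * Q x + B ε * Q x
    ∃ C : ℝ, 0 < C ∧ ∀ ε ∈ Set.Ioc (0 : ℝ) 1, ∀ x : EuclideanSpace ℝ (Fin d),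
      r₀ < ‖x‖ → ‖x‖ < r₀ + ε → ‖gradient (u ε) x‖ ≤ C := by
  intro D A B u
  have hb : 0 < (k : ℝ) + d - 2 := by
    rify at hd hk
    linarith
  obtain ⟨C, hC, hbound⟩ := insulated_no_gradient_blowup_general k.cast_nonneg hb hr₀
    (2 - d - 2 * k) (d + 2 * k - 2) (r₀ + 1) (hQ.contDiff 1).contDiffOn
  exact ⟨C, hC, fun ε hε x => hbound (r₀ + ε) (add_le_add_right hε.2 r₀) x⟩
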